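/- Let a_1, …, a_m be positive integers and R := {x ∈ ℤ^m : |x_i| ≤ a_i for all i}. Suppose C : R → [0,∞) satisfies, for arguments in R: (i) C is even and C(x) = 0 iff x = 0; (ii) C(x) ≤ C(y) whenever x ⪯ y; (iii) C(x+y) ≤ C(x) + C(y) whenever x, y, x+y ∈ R. Then the function C̄ : ℤ^m → [0,∞) defined by C̄(x) := max{C(y) : y ∈ R, y ⪯ x} coincides with C on R and satisfies (i), (ii), (iii) on all of ℤ^m. -/

import Mathlib

/-- The partial order `x ⪯ y` on integer vectors: `|x j| ≤ |y j|` and `x j * y j ≥ 0`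
for every coordinate `j`. -/
def PreOrdInt {ι : Type*} (x y : ι → ℤ) : Prop :=
  ∀ j, |x j| ≤ |y j| ∧ 0 ≤ x j * y j

/-!
The relation `x ⪯ y` says that `x` lies in the order interval spanned by `0` and `y`. These
intervals have a Riesz decomposition property: if `z ⪯ x + y`, then `z = u + v` with `u ⪯ x` and
`v ⪯ y`, and `u`, `v` can moreover be chosen with `u, v ⪯ z`. When `z` is a maximizer defining
`C̄ (x + y)`, the last property keeps `u` and `v` in the region `R`, so that
`C̄ (x + y) = C z ≤ C u + C v ≤ C̄ x + C̄ y`.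
-/

section LinearOrder

variable {α : Type*}

theorem abs_le_abs_and_mul_nonneg_iff_mem_uIcc [Ring α] [LinearOrder α] [IsStrictOrderedRing α]
    {a b : α} : |a| ≤ |b| ∧ 0 ≤ a * b ↔ a ∈ Set.uIcc 0 b := by
  rw [Set.mem_uIcc]
  constructor
  · rintro ⟨habs, hmul⟩
    rcases lt_trichotomy b 0 with hb | rfl | hb
    · have ha : a ≤ 0 := nonpos_of_mul_nonneg_left hmul hb
      rw [abs_of_nonpos ha, abs_of_neg hb] at habs
      exact .inr ⟨neg_le_neg_iff.1 habs, ha⟩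
    · have ha : a = 0 := by simpa using habs
      exact .inl ⟨ha.ge, ha.le⟩
    · have ha : 0 ≤ a := nonneg_of_mul_nonneg_left hmul hb
      rw [abs_of_nonneg ha, abs_of_pos hb] at habs
      exact .inl ⟨ha, habs⟩
  · rintro (⟨ha, hab⟩ | ⟨hba, ha⟩)
    · exact ⟨abs_le_abs_of_nonneg ha hab, mul_nonneg ha (ha.trans hab)⟩
    · exact ⟨abs_le_abs_of_nonpos ha hba, mul_nonneg_of_nonpos_of_nonpos ha (hba.trans ha)⟩

variable [AddCommGroup α] [LinearOrder α] [IsOrderedAddMonoid α]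

theorem exists_add_eq_of_mem_uIcc_zero_add {x y z : α} (hz : z ∈ Set.uIcc 0 (x + y)) :
    ∃ u ∈ Set.uIcc 0 x ∩ Set.uIcc 0 z, ∃ v ∈ Set.uIcc 0 y ∩ Set.uIcc 0 z, u + v = z := by
  simp only [Set.mem_inter_iff, Set.mem_uIcc] at hz ⊢
  rcases hz with hz | hz
  · refine ⟨max 0 (min x z), ?_, z - max 0 (min x z), ?_, add_sub_cancel _ _⟩ <;> grind
  · refine ⟨min 0 (max x z), ?_, z - min 0 (max x z), ?_, add_sub_cancel _ _⟩ <;> grind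

end LinearOrder

section PreOrdInt

variable {ι : Type*} {x y z : ι → ℤ}

theorem preOrdInt_iff_mem_uIcc : PreOrdInt x y ↔ x ∈ Set.uIcc 0 y := by
  rw [← Set.pi_univ_uIcc, Set.mem_univ_pi]
  exact forall_congr' fun _ => abs_le_abs_and_mul_nonneg_iff_mem_uIcc

namespace PreOrdInt

theorem refl (x : ι → ℤ) : PreOrdInt x x :=
  preOrdInt_iff_mem_uIcc.2 Set.right_mem_uIcc

theorem trans (hxy : PreOrdInt x y) (hyz : PreOrdInt y z) : PreOrdInt x z := by
  rw [preOrdInt_iff_mem_uIcc] at *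
  exact Set.uIcc_subset_uIcc_left hyz hxy

theorem neg (h : PreOrdInt x y) : PreOrdInt (-x) (-y) := fun j => by
  simpa only [Pi.neg_apply, abs_neg, neg_mul_neg] using h j

theorem eq_zero (h : PreOrdInt x 0) : x = 0 := by
  simpa only [preOrdInt_iff_mem_uIcc, Set.uIcc_self, Set.mem_singleton_iff] using h

theorem exists_add_eq (h : PreOrdInt z (x + y)) :
    ∃ u v, PreOrdInt u x ∧ PreOrdInt v y ∧ PreOrdInt u z ∧ PreOrdInt v z ∧ u + v = z := by
  choose u hu v hv huv using fun j =>
    exists_add_eq_of_mem_uIcc_zero_add (abs_le_abs_and_mul_nonneg_iff_mem_uIcc.1 (h j))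
  simp only [PreOrdInt, abs_le_abs_and_mul_nonneg_iff_mem_uIcc]
  exact ⟨u, v, fun j => (hu j).1, fun j => (hv j).1, fun j => (hu j).2, fun j => (hv j).2,
    funext huv⟩

end PreOrdInt

theorem preOrdInt_single_sign [DecidableEq ι] (x : ι → ℤ) (i : ι) :
    PreOrdInt (Pi.single i (x i).sign) x := by
  intro j
  rcases eq_or_ne j i with rfl | hji
  · rw [Pi.single_eq_same, Int.sign_mul_self_eq_abs]
    refine ⟨?_, abs_nonneg _⟩
    rcases lt_trichotomy (x j) 0 with hx | hx | hx <;> grind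
  · simp [Pi.single_eq_of_ne hji]

theorem exists_mem_ne_zero_preOrdInt [DecidableEq ι] {R : Set (ι → ℤ)}
    (hneg : ∀ x ∈ R, -x ∈ R) (hunit : ∀ i, Pi.single i 1 ∈ R) (hx : x ≠ 0) :
    ∃ y ∈ R, y ≠ 0 ∧ PreOrdInt y x := by
  obtain ⟨i, hi⟩ := Function.ne_iff.1 hx
  refine ⟨Pi.single i (x i).sign, ?_, ?_, preOrdInt_single_sign x i⟩
  · rcases lt_or_gt_of_ne hi with hlt | hgt
    · rw [Int.sign_eq_neg_one_of_neg hlt, Pi.single_neg]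
      exact hneg _ (hunit i)
    · rw [Int.sign_eq_one_of_pos hgt]
      exact hunit i
  · rwa [Ne, Pi.single_eq_zero_iff, Int.sign_eq_zero_iff_zero]

end PreOrdInt

/-- `Cbar` is the maximal extension `x ↦ max {C y : y ∈ R, y ⪯ x}` of `C` from `R`. As a relation
between `C` and `Cbar`, it includes the existence of the maxima. -/
def IsMaxExtension {ι M : Type*} [LE M] (R : Set (ι → ℤ)) (C Cbar : (ι → ℤ) → M) : Prop :=
  ∀ x, IsGreatest {c | ∃ y ∈ R, PreOrdInt y x ∧ C y = c} (Cbar x)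

namespace IsMaxExtension

variable {ι M : Type*} {R : Set (ι → ℤ)} {C Cbar : (ι → ℤ) → M} {x y : ι → ℤ}

section Preorder

variable [Preorder M]

theorem exists_eq (h : IsMaxExtension R C Cbar) (x : ι → ℤ) :
    ∃ y ∈ R, PreOrdInt y x ∧ C y = Cbar x :=
  (h x).1

theorem le (h : IsMaxExtension R C Cbar) (hy : y ∈ R) (hyx : PreOrdInt y x) : C y ≤ Cbar x :=
  (h x).2 ⟨y, hy, hyx, rfl⟩

theorem nonneg [Zero M] (h : IsMaxExtension R C Cbar) (hC : ∀ x ∈ R, 0 ≤ C x) (x : ι → ℤ) :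
    0 ≤ Cbar x := by
  obtain ⟨y, hy, -, hCy⟩ := h.exists_eq x
  exact hCy ▸ hC y hy

theorem mono (h : IsMaxExtension R C Cbar) (hxy : PreOrdInt x y) : Cbar x ≤ Cbar y := by
  obtain ⟨z, hz, hzx, hCz⟩ := h.exists_eq x
  exact hCz ▸ h.le hz (hzx.trans hxy)

theorem neg_le (h : IsMaxExtension R C Cbar) (hneg : ∀ x ∈ R, -x ∈ R)
    (heven : ∀ x ∈ R, C (-x) = C x) (x : ι → ℤ) : Cbar (-x) ≤ Cbar x := by
  obtain ⟨y, hy, hyx, hCy⟩ := h.exists_eq (-x)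
  rw [← hCy, ← heven y hy]
  exact h.le (hneg y hy) (neg_neg x ▸ hyx.neg)

theorem add_le [Add M] [AddLeftMono M] [AddRightMono M] (h : IsMaxExtension R C Cbar)
    (hlower : ∀ y ∈ R, ∀ x, PreOrdInt x y → x ∈ R)
    (hsub : ∀ x ∈ R, ∀ y ∈ R, x + y ∈ R → C (x + y) ≤ C x + C y) (x y : ι → ℤ) :
    Cbar (x + y) ≤ Cbar x + Cbar y := by
  obtain ⟨z, hz, hzxy, hCz⟩ := h.exists_eq (x + y)
  obtain ⟨u, v, hux, hvy, huz, hvz, rfl⟩ := hzxy.exists_add_eq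
  have hu : u ∈ R := hlower _ hz u huz
  have hv : v ∈ R := hlower _ hz v hvz
  calc
    Cbar (x + y) = C (u + v) := hCz.symm
    _ ≤ C u + C v := hsub u hu v hv hz
    _ ≤ Cbar x + Cbar y := add_le_add (h.le hu hux) (h.le hv hvy)

end Preorder

variable [PartialOrder M]

theorem eq_of_mem (h : IsMaxExtension R C Cbar)
    (hmono : ∀ x ∈ R, ∀ y ∈ R, PreOrdInt x y → C x ≤ C y) (hx : x ∈ R) : Cbar x = C x := by
  obtain ⟨y, hy, hyx, hCy⟩ := h.exists_eq x
  exact le_antisymm (hCy ▸ hmono y hy x hx hyx) (h.le hx (.refl x))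

theorem even (h : IsMaxExtension R C Cbar) (hneg : ∀ x ∈ R, -x ∈ R)
    (heven : ∀ x ∈ R, C (-x) = C x) (x : ι → ℤ) : Cbar (-x) = Cbar x :=
  le_antisymm (h.neg_le hneg heven x) (by simpa only [neg_neg] using h.neg_le hneg heven (-x))

theorem eq_zero_iff [Zero M] (h : IsMaxExtension R C Cbar)
    (hbelow : ∀ x ≠ 0, ∃ y ∈ R, y ≠ 0 ∧ PreOrdInt y x) (hC : ∀ x ∈ R, 0 ≤ C x)
    (hzero : ∀ x ∈ R, (C x = 0 ↔ x = 0)) (x : ι → ℤ) : Cbar x = 0 ↔ x = 0 := by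
  constructor
  · intro hx
    by_contra hx0
    obtain ⟨y, hy, hy0, hyx⟩ := hbelow x hx0
    exact hy0 ((hzero y hy).1 (le_antisymm (hx ▸ h.le hy hyx) (hC y hy)))
  · rintro rfl
    obtain ⟨y, hy, hy0, hCy⟩ := h.exists_eq 0
    exact hCy ▸ (hzero y hy).2 hy0.eq_zero

end IsMaxExtension

theorem cost_extension_subadditive_general {ι M : Type*} [DecidableEq ι] [AddCommMonoid M]
    [PartialOrder M] [IsOrderedAddMonoid M] {R : Set (ι → ℤ)}
    (hlower : ∀ y ∈ R, ∀ x, PreOrdInt x y → x ∈ R) (hneg : ∀ x ∈ R, -x ∈ R)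
    (hunit : ∀ i, Pi.single i 1 ∈ R) {C : (ι → ℤ) → M}
    (hC0 : ∀ x ∈ R, 0 ≤ C x)
    (heven : ∀ x ∈ R, C (-x) = C x)
    (hzero : ∀ x ∈ R, (C x = 0 ↔ x = 0))
    (hmono : ∀ x ∈ R, ∀ y ∈ R, PreOrdInt x y → C x ≤ C y)
    (hsub : ∀ x ∈ R, ∀ y ∈ R, x + y ∈ R → C (x + y) ≤ C x + C y)
    {Cbar : (ι → ℤ) → M} (hCbar : IsMaxExtension R C Cbar) :
    (∀ x ∈ R, Cbar x = C x) ∧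
    (∀ x, 0 ≤ Cbar x) ∧
    (∀ x, Cbar (-x) = Cbar x) ∧
    (∀ x, Cbar x = 0 ↔ x = 0) ∧
    (∀ x y, PreOrdInt x y → Cbar x ≤ Cbar y) ∧
    (∀ x y, Cbar (x + y) ≤ Cbar x + Cbar y) :=
  ⟨fun _ => hCbar.eq_of_mem hmono,
    hCbar.nonneg hC0,
    hCbar.even hneg heven,
    hCbar.eq_zero_iff (fun _ => exists_mem_ne_zero_preOrdInt hneg hunit) hC0 hzero,
    fun _ _ => hCbar.mono,
    hCbar.add_le hlower hsub⟩

theorem abs_single_one_le {ι : Type*} [DecidableEq ι] {a : ι → ℤ} (ha : ∀ i, 0 < a i) (i j : ι) :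
    |(Pi.single i 1 : ι → ℤ) j| ≤ a j := by
  rcases eq_or_ne j i with rfl | hji
  · simpa using Int.add_one_le_of_lt (ha j)
  · simpa [Pi.single_eq_of_ne hji] using (ha j).le

/-- Extension of a multi-material cost from a rectangle
`R = [-a_1,a_1] × ⋯ × [-a_m,a_m] ⊆ ℤ^m` to all of `ℤ^m`: if `C` satisfies the cost
axioms (i) even and vanishing exactly at `0`, (ii) monotone with respect to `⪯`,
(iii) subadditive, with all arguments restricted to `R`, then the function
`C̄(x) := max {C(y) : y ∈ R, y ⪯ x}` coincides with `C` on `R` and satisfies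
(i), (ii), (iii) on all of `ℤ^m`. -/
theorem cost_extension_subadditive {m : ℕ} (a : Fin m → ℤ) (ha : ∀ i, 0 < a i)
    (R : Set (Fin m → ℤ)) (hR : R = {x | ∀ i, |x i| ≤ a i})
    (C : (Fin m → ℤ) → ℝ)
    (hC0 : ∀ x ∈ R, 0 ≤ C x)
    (heven : ∀ x ∈ R, C (-x) = C x)
    (hzero : ∀ x ∈ R, (C x = 0 ↔ x = 0))
    (hmono : ∀ x ∈ R, ∀ y ∈ R, PreOrdInt x y → C x ≤ C y)
    (hsub : ∀ x ∈ R, ∀ y ∈ R, x + y ∈ R → C (x + y) ≤ C x + C y)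
    (Cbar : (Fin m → ℤ) → ℝ)
    (hCbar : ∀ x, IsGreatest {c | ∃ y ∈ R, PreOrdInt y x ∧ C y = c} (Cbar x)) :
    (∀ x ∈ R, Cbar x = C x) ∧
    (∀ x, 0 ≤ Cbar x) ∧
    (∀ x, Cbar (-x) = Cbar x) ∧
    (∀ x, Cbar x = 0 ↔ x = 0) ∧
    (∀ x y, PreOrdInt x y → Cbar x ≤ Cbar y) ∧
    (∀ x y, Cbar (x + y) ≤ Cbar x + Cbar y) := by
  subst hR
  exact cost_extension_subadditive_general (R := {x | ∀ i, |x i| ≤ a i})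
    (fun y hy x hxy i => (hxy i).1.trans (hy i)) (fun x hx i => by simpa using hx i)
    (abs_single_one_le ha) hC0 heven hzero hmono hsub hCbar
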